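/- There exists a constant C > 0, depending only on L, η, β, κ, τ, m, δ and p (and independent of λ), such that every solution (u, w, θ, q) of the resolvent system with data (f₁, f₂, f₃, f₄) satisfies ∫₀ᴸ m(x) |w′(x)|² dx + τ ∫₀ᴸ |q(x)|² dx ≤ C ‖F‖ ‖U‖. -/

import Mathlib

open MeasureTheory Set intervalIntegral Complex

noncomputable section

/-- A (smooth) solution of the resolvent system `(iλ − 𝒜)U = F` with clamped/zero-flux
boundary conditions: the four ODEs on `(0, L)` together with
`u(0) = u(L) = 0`, `w(0) = w(L) = 0`, `q(0) = q(L) = 0`. -/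
def ResolventSol (L η β κ τ : ℝ) (m δ p : ℝ → ℝ) (lam : ℝ)
    (f₁ f₂ f₃ f₄ u w θ q : ℝ → ℂ) : Prop :=
  ContDiff ℝ (⊤ : ℕ∞) u ∧ ContDiff ℝ (⊤ : ℕ∞) w ∧ ContDiff ℝ (⊤ : ℕ∞) θ ∧ ContDiff ℝ (⊤ : ℕ∞) q ∧
  ContDiff ℝ (⊤ : ℕ∞) f₁ ∧ ContDiff ℝ (⊤ : ℕ∞) f₂ ∧ ContDiff ℝ (⊤ : ℕ∞) f₃ ∧ ContDiff ℝ (⊤ : ℕ∞) f₄ ∧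
  (∀ x ∈ Ioo (0 : ℝ) L,
    (Complex.I * (lam : ℂ) * u x - w x = f₁ x) ∧
    (Complex.I * (lam : ℂ) * (m x : ℂ) * w x
        - deriv (fun y => (p y : ℂ) * deriv u y + 2 * (δ y : ℂ) * deriv w y) x
        + (η : ℂ) * deriv θ x = (m x : ℂ) * f₂ x) ∧
    (Complex.I * (lam : ℂ) * θ x
        + deriv (fun y => (κ : ℂ) * q y + (η : ℂ) * w y) x = f₃ x) ∧
    (Complex.I * (lam : ℂ) * (τ : ℂ) * q x + (κ : ℂ) * deriv θ x + (β : ℂ) * q x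
        = (τ : ℂ) * f₄ x)) ∧
  u 0 = 0 ∧ u L = 0 ∧ w 0 = 0 ∧ w L = 0 ∧ q 0 = 0 ∧ q L = 0

/-- Squared phase-space norm of `U = (u, w, θ, q)`. -/
def normUsq (L τ : ℝ) (m p : ℝ → ℝ) (u w θ q : ℝ → ℂ) : ℝ :=
  (∫ x in (0 : ℝ)..L, p x * ‖deriv u x‖ ^ 2) + (∫ x in (0 : ℝ)..L, m x * ‖w x‖ ^ 2)
    + (∫ x in (0 : ℝ)..L, ‖θ x‖ ^ 2) + τ * ∫ x in (0 : ℝ)..L, ‖q x‖ ^ 2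

/-- Squared phase-space norm of the data `F = (f₁, f₂, f₃, f₄)`. -/
def normFsq (L τ : ℝ) (m p : ℝ → ℝ) (f₁ f₂ f₃ f₄ : ℝ → ℂ) : ℝ :=
  (∫ x in (0 : ℝ)..L, p x * ‖deriv f₁ x‖ ^ 2) + (∫ x in (0 : ℝ)..L, m x * ‖f₂ x‖ ^ 2)
    + (∫ x in (0 : ℝ)..L, ‖f₃ x‖ ^ 2) + τ * ∫ x in (0 : ℝ)..L, ‖f₄ x‖ ^ 2

lemma aux_re_le (a b : ℂ) (t : ℝ) (ht : 0 < t) :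
    a.re * b.re + a.im * b.im ≤ (t * ‖a‖ ^ 2 + t⁻¹ * ‖b‖ ^ 2) / 2 := by
  rw [Complex.sq_norm, Complex.sq_norm, Complex.normSq_apply, Complex.normSq_apply]
  have h1 : 0 ≤ t⁻¹ * ((t * a.re - b.re) ^ 2 + (t * a.im - b.im) ^ 2) := by positivity
  have h2 : t⁻¹ * ((t * a.re - b.re) ^ 2 + (t * a.im - b.im) ^ 2)
      = t * (a.re * a.re + a.im * a.im) + t⁻¹ * (b.re * b.re + b.im * b.im)
        - 2 * (a.re * b.re + a.im * b.im) := by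
    field_simp
    ring
  linarith

lemma aux_opt (X a b : ℝ) (ha : 0 ≤ a) (hb : 0 ≤ b)
    (h : ∀ t : ℝ, 0 < t → X ≤ t / 2 * a + t⁻¹ / 2 * b) :
    X ≤ Real.sqrt a * Real.sqrt b := by
  obtain ⟨s, hs, rfl⟩ : ∃ s : ℝ, 0 ≤ s ∧ a = s ^ 2 :=
    ⟨Real.sqrt a, Real.sqrt_nonneg _, (Real.sq_sqrt ha).symm⟩
  obtain ⟨r, hr, rfl⟩ : ∃ s : ℝ, 0 ≤ s ∧ b = s ^ 2 :=
    ⟨Real.sqrt b, Real.sqrt_nonneg _, (Real.sq_sqrt hb).symm⟩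
  rw [Real.sqrt_sq hs, Real.sqrt_sq hr]
  refine le_of_forall_pos_le_add fun e he => ?_
  have hd : 0 < s + r + 1 := by positivity
  set ε := e / (s + r + 1) with hε
  have hε0 : 0 < ε := by positivity
  have h1 := h ((r + ε) / (s + ε)) (by positivity)
  have h2 : (r + ε) / (s + ε) * s ^ 2 ≤ (r + ε) * s := by
    rw [div_mul_eq_mul_div, div_le_iff₀ (by positivity)]
    nlinarith [mul_nonneg (mul_nonneg (add_nonneg hr hε0.le) hs) hε0.le]
  have h3 : ((r + ε) / (s + ε))⁻¹ * r ^ 2 ≤ (s + ε) * r := by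
    rw [inv_div, div_mul_eq_mul_div, div_le_iff₀ (by positivity)]
    nlinarith [mul_nonneg (mul_nonneg (add_nonneg hs hε0.le) hr) hε0.le]
  have h4 : ε * (s + r + 1) = e := by rw [hε]; field_simp
  nlinarith

lemma aux_cs (L τ : ℝ) (m p : ℝ → ℝ) (hL : 0 < L) (hτ : 0 < τ)
    (hmpos : ∀ x ∈ Icc (0 : ℝ) L, 0 < m x) (hppos : ∀ x ∈ Icc (0 : ℝ) L, 0 < p x)
    (f₁ f₂ f₃ f₄ : ℝ → ℂ) : 0 ≤ normFsq L τ m p f₁ f₂ f₃ f₄ := by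
  unfold normFsq
  have h1 : 0 ≤ ∫ x in (0 : ℝ)..L, p x * ‖deriv f₁ x‖ ^ 2 :=
    intervalIntegral.integral_nonneg hL.le fun x hx => mul_nonneg (hppos x hx).le (by positivity)
  have h2 : 0 ≤ ∫ x in (0 : ℝ)..L, m x * ‖f₂ x‖ ^ 2 :=
    intervalIntegral.integral_nonneg hL.le fun x hx => mul_nonneg (hmpos x hx).le (by positivity)
  have h3 : 0 ≤ ∫ x in (0 : ℝ)..L, ‖f₃ x‖ ^ 2 :=
    intervalIntegral.integral_nonneg hL.le fun x hx => by positivity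
  have h4 : 0 ≤ ∫ x in (0 : ℝ)..L, ‖f₄ x‖ ^ 2 :=
    intervalIntegral.integral_nonneg hL.le fun x hx => by positivity
  positivity

lemma aux_int (L τ : ℝ) (m p : ℝ → ℝ) (hL : 0 < L)
    (hm : ContinuousOn m (Icc 0 L)) (hp : ContinuousOn p (Icc 0 L))
    (g₁ f₂ f₃ f₄ : ℝ → ℂ) (h₁ : Continuous g₁) (h₂ : Continuous f₂) (h₃ : Continuous f₃)
    (h₄ : Continuous f₄) :
    IntervalIntegrable (fun x => p x * ‖g₁ x‖ ^ 2 + m x * ‖f₂ x‖ ^ 2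
      + ‖f₃ x‖ ^ 2 + τ * ‖f₄ x‖ ^ 2) volume 0 L ∧
    (∫ x in (0 : ℝ)..L, p x * ‖g₁ x‖ ^ 2 + m x * ‖f₂ x‖ ^ 2
      + ‖f₃ x‖ ^ 2 + τ * ‖f₄ x‖ ^ 2) =
    (∫ x in (0 : ℝ)..L, p x * ‖g₁ x‖ ^ 2) + (∫ x in (0 : ℝ)..L, m x * ‖f₂ x‖ ^ 2)
    + (∫ x in (0 : ℝ)..L, ‖f₃ x‖ ^ 2) + τ * ∫ x in (0 : ℝ)..L, ‖f₄ x‖ ^ 2 := by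
  rw [← uIcc_of_le hL.le] at hm hp
  have i1 : IntervalIntegrable (fun x => p x * ‖g₁ x‖ ^ 2) volume 0 L :=
    (hp.mul (h₁.norm.pow 2).continuousOn).intervalIntegrable
  have i2 : IntervalIntegrable (fun x => m x * ‖f₂ x‖ ^ 2) volume 0 L :=
    (hm.mul (h₂.norm.pow 2).continuousOn).intervalIntegrable
  have i3 : IntervalIntegrable (fun x => ‖f₃ x‖ ^ 2) volume 0 L :=
    (h₃.norm.pow 2).intervalIntegrable _ _
  have i4 : IntervalIntegrable (fun x => τ * ‖f₄ x‖ ^ 2) volume 0 L :=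
    (continuous_const.mul (h₄.norm.pow 2)).intervalIntegrable _ _
  refine ⟨((i1.add i2).add i3).add i4, ?_⟩
  rw [intervalIntegral.integral_add ((i1.add i2).add i3) i4,
    intervalIntegral.integral_add (i1.add i2) i3, intervalIntegral.integral_add i1 i2,
    intervalIntegral.integral_const_mul]

/-- The boundary-flux function of the energy identity. -/
def flux (η κ : ℝ) (δ p : ℝ → ℝ) (u w θ q : ℝ → ℂ) (y : ℝ) : ℝ :=
  (((p y : ℂ) * deriv u y + 2 * (δ y : ℂ) * deriv w y) * star (w y)
    - (η : ℂ) * (θ y * star (w y)) - (κ : ℂ) * (q y * star (θ y))).re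

lemma aux_ac_of_contDiff (L : ℝ) (g : ℝ → ℝ) (hg : ContDiff ℝ 1 g) :
    AbsolutelyContinuousOnInterval g 0 L := by
  obtain ⟨K, hK⟩ := hg.contDiffOn.exists_lipschitzOnWith (s := uIcc 0 L) (by norm_num)
    (convex_uIcc 0 L) isCompact_uIcc
  exact hK.absolutelyContinuousOnInterval

lemma aux_flux_ac (L η κ : ℝ) (δ p : ℝ → ℝ) (u w θ q : ℝ → ℂ)
    (hδ : AbsolutelyContinuousOnInterval δ 0 L) (hp : AbsolutelyContinuousOnInterval p 0 L)
    (hu : ContDiff ℝ 1 (deriv u)) (hw : ContDiff ℝ 1 w) (hw' : ContDiff ℝ 1 (deriv w))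
    (hθ : ContDiff ℝ 1 θ) (hq : ContDiff ℝ 1 q) :
    AbsolutelyContinuousOnInterval (flux η κ δ p u w θ q) 0 L := by
  have re : ∀ g : ℝ → ℂ, ContDiff ℝ 1 g → ContDiff ℝ 1 (fun x => (g x).re) :=
    fun g hg => Complex.reCLM.contDiff.comp hg
  have im : ∀ g : ℝ → ℂ, ContDiff ℝ 1 g → ContDiff ℝ 1 (fun x => (g x).im) :=
    fun g hg => Complex.imCLM.contDiff.comp hg
  have dot : ∀ g h : ℝ → ℂ, ContDiff ℝ 1 g → ContDiff ℝ 1 h →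
      ContDiff ℝ 1 (fun x => (g x).re * (h x).re + (g x).im * (h x).im) :=
    fun g h hg hh => ((re g hg).mul (re h hh)).add ((im g hg).mul (im h hh))
  have h1 := hp.fun_mul (aux_ac_of_contDiff L _ (dot _ _ hu hw))
  have h2 := (hδ.fun_mul (aux_ac_of_contDiff L _ (dot _ _ hw' hw))).const_mul 2
  have h3 := (aux_ac_of_contDiff L _ (dot _ _ hθ hw)).const_mul η
  have h4 := (aux_ac_of_contDiff L _ (dot _ _ hq hθ)).const_mul κ
  have h5 := ((h1.fun_add h2).fun_sub h3).fun_sub h4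
  have hfun : flux η κ δ p u w θ q = fun i =>
      p i * ((deriv u i).re * (w i).re + (deriv u i).im * (w i).im) +
            2 * (δ i * ((deriv w i).re * (w i).re + (deriv w i).im * (w i).im)) -
          η * ((θ i).re * (w i).re + (θ i).im * (w i).im) -
        κ * ((q i).re * (θ i).re + (q i).im * (θ i).im) := by
    funext y
    simp [flux]
    ring
  rw [hfun]
  exact h5

lemma aux_flux_deriv (L η β κ τ : ℝ) (m δ p : ℝ → ℝ) (lam : ℝ)
    (f₁ f₂ f₃ f₄ u w θ q : ℝ → ℂ)
    (h : ResolventSol L η β κ τ m δ p lam f₁ f₂ f₃ f₄ u w θ q)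
    (x : ℝ) (hx : x ∈ Ioo 0 L) (hp : DifferentiableAt ℝ p x) (hδ : DifferentiableAt ℝ δ x) :
    2 * δ x * ‖deriv w x‖ ^ 2 + β * ‖q x‖ ^ 2 = deriv (flux η κ δ p u w θ q) x
      + (p x * ((deriv f₁ x).re * (deriv u x).re + (deriv f₁ x).im * (deriv u x).im)
      + m x * ((f₂ x).re * (w x).re + (f₂ x).im * (w x).im)
      + ((f₃ x).re * (θ x).re + (f₃ x).im * (θ x).im)
      + τ * ((f₄ x).re * (q x).re + (f₄ x).im * (q x).im)) := by
  obtain ⟨hu, hw, hθ, hq, hf1, hf2, hf3, hf4, heq, -⟩ := h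
  have D : ∀ g : ℝ → ℂ, ContDiff ℝ (⊤ : ℕ∞) g → HasDerivAt g (deriv g x) x := fun g hg =>
    (hg.differentiable (by simp) x).hasDerivAt
  have D2 : ∀ g : ℝ → ℂ, ContDiff ℝ (⊤ : ℕ∞) g → DifferentiableAt ℝ (deriv g) x := fun g hg =>
    ((contDiff_infty_iff_deriv.1 hg).2.differentiable (by simp) x)
  have hS : DifferentiableAt ℝ
      (fun y => (p y : ℂ) * deriv u y + 2 * (δ y : ℂ) * deriv w y) x := by
    have hpc : DifferentiableAt ℝ (fun y => (p y : ℂ)) x := hp.hasDerivAt.ofReal_comp.differentiableAt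
    have hdc : DifferentiableAt ℝ (fun y => (δ y : ℂ)) x := hδ.hasDerivAt.ofReal_comp.differentiableAt
    exact (hpc.mul (D2 u hu)).add ((hdc.const_mul 2).mul (D2 w hw))
  have hS' := hS.hasDerivAt
  obtain ⟨e1, e2, e3, e4⟩ := heq x hx
  have e1' : Complex.I * (lam : ℂ) * deriv u x - deriv w x = deriv f₁ x := by
    have hev : f₁ =ᶠ[nhds x] fun y => Complex.I * (lam : ℂ) * u y - w y := by
      filter_upwards [isOpen_Ioo.mem_nhds hx] with y hy
      exact (heq y hy).1.symm
    rw [hev.deriv_eq]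
    exact (((D u hu).const_mul _).sub (D w hw)).deriv.symm
  have e3' : deriv (fun y => (κ : ℂ) * q y + (η : ℂ) * w y) x
      = κ * deriv q x + η * deriv w x :=
    (((D q hq).const_mul _).add ((D w hw).const_mul _)).deriv
  rw [e3'] at e3
  generalize deriv (fun y => (p y : ℂ) * deriv u y + 2 * (δ y : ℂ) * deriv w y) x = S' at hS' e2
  have hfl := ((hS'.mul (D w hw).star).sub (((D θ hθ).mul (D w hw).star).const_mul (η : ℂ))).sub
    (((D q hq).mul (D θ hθ).star).const_mul (κ : ℂ))
  have hfl2 := (Complex.reCLM.hasFDerivAt.comp_hasDerivAt x hfl).deriv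
  have hfl3 : deriv (flux η κ δ p u w θ q) x = _ := hfl2
  rw [hfl3]
  have r1 := congrArg Complex.re e1'
  have i1 := congrArg Complex.im e1'
  have r2 := congrArg Complex.re e2
  have i2 := congrArg Complex.im e2
  have r3 := congrArg Complex.re e3
  have i3 := congrArg Complex.im e3
  have r4 := congrArg Complex.re e4
  have i4 := congrArg Complex.im e4
  rw [Complex.sq_norm, Complex.sq_norm, Complex.normSq_apply, Complex.normSq_apply]
  simp at r1 i1 r2 i2 r3 i3 r4 i4 ⊢
  linear_combination p x * (deriv u x).re * r1 + p x * (deriv u x).im * i1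
    + (w x).re * r2 + (w x).im * i2 + (θ x).re * r3 + (θ x).im * i3
    + (q x).re * r4 + (q x).im * i4

lemma aux_ae_diff (L : ℝ) (f : ℝ → ℝ) (hf : ∃ K, LipschitzOnWith K f (Icc 0 L)) :
    ∀ᵐ x : ℝ, x ∈ Ioo 0 L → DifferentiableAt ℝ f x := by
  obtain ⟨K, hK⟩ := hf
  filter_upwards [hK.ae_differentiableWithinAt_of_mem_real] with x hx hxI
  exact (hx (Ioo_subset_Icc_self hxI)).differentiableAt (Icc_mem_nhds hxI.1 hxI.2)

theorem resolvent_estimate_w_q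
    (L η β κ τ : ℝ) (hL : 0 < L) (hη : 0 < η) (hβ : 0 < β) (hκ : 0 < κ) (hτ : 0 < τ)
    (m δ p : ℝ → ℝ)
    (hmLip : ∃ K, LipschitzOnWith K m (Icc 0 L))
    (hδLip : ∃ K, LipschitzOnWith K δ (Icc 0 L))
    (hpLip : ∃ K, LipschitzOnWith K p (Icc 0 L))
    (hmpos : ∀ x ∈ Icc (0 : ℝ) L, 0 < m x)
    (hδpos : ∀ x ∈ Icc (0 : ℝ) L, 0 < δ x)
    (hppos : ∀ x ∈ Icc (0 : ℝ) L, 0 < p x)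
    :
    ∃ C > (0 : ℝ),
      ∀ (lam : ℝ) (f₁ f₂ f₃ f₄ u w θ q : ℝ → ℂ),
        ResolventSol L η β κ τ m δ p lam f₁ f₂ f₃ f₄ u w θ q →
          (∫ x in (0 : ℝ)..L, m x * ‖deriv w x‖ ^ 2)
            + τ * (∫ x in (0 : ℝ)..L, ‖q x‖ ^ 2)
            ≤ C * Real.sqrt (normFsq L τ m p f₁ f₂ f₃ f₄)
              * Real.sqrt (normUsq L τ m p u w θ q) := by
  have hδd := aux_ae_diff L δ hδLip
  have hpd := aux_ae_diff L p hpLip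
  obtain ⟨Km, hKm⟩ := hmLip
  obtain ⟨Kδ, hKδ⟩ := hδLip
  obtain ⟨Kp, hKp⟩ := hpLip
  have cm := hKm.continuousOn
  have cδ := hKδ.continuousOn
  have cp := hKp.continuousOn
  have huI : uIcc 0 L = Icc 0 L := uIcc_of_le hL.le
  obtain ⟨M, hM⟩ := isCompact_Icc.exists_bound_of_continuousOn
    (cm.div cδ fun x hx => (hδpos x hx).ne')
  have hM0 : 0 ≤ M := (norm_nonneg _).trans (hM 0 ⟨le_rfl, hL.le⟩)
  have hmδ : ∀ x ∈ Icc (0 : ℝ) L, m x ≤ M * δ x := fun x hx => by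
    have : m x / δ x ≤ M := (le_abs_self _).trans (hM x hx)
    rwa [div_le_iff₀ (hδpos x hx)] at this
  have hC : 0 < M + τ / β := by positivity
  refine ⟨M + τ / β, hC, fun lam f₁ f₂ f₃ f₄ u w θ q hsol => ?_⟩
  have hsol' := hsol
  obtain ⟨hu, hw, hθ, hq, hf1, hf2, hf3, hf4, heq, hu0, huL, hw0, hwL, hq0, hqL⟩ := hsol'
  have one : ∀ g : ℝ → ℂ, ContDiff ℝ (⊤ : ℕ∞) g → ContDiff ℝ 1 g := fun g hg =>
    hg.of_le (by exact_mod_cast le_top)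
  have der : ∀ g : ℝ → ℂ, ContDiff ℝ (⊤ : ℕ∞) g → ContDiff ℝ (⊤ : ℕ∞) (deriv g) := fun g hg =>
    (contDiff_infty_iff_deriv.1 hg).2
  have hac : AbsolutelyContinuousOnInterval (flux η κ δ p u w θ q) 0 L :=
    aux_flux_ac L η κ δ p u w θ q
      (LipschitzOnWith.absolutelyContinuousOnInterval (by rw [huI]; exact hKδ))
      (LipschitzOnWith.absolutelyContinuousOnInterval (by rw [huI]; exact hKp))
      (one _ (der u hu)) (one _ hw) (one _ (der w hw)) (one _ hθ) (one _ hq)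
  have hfl0 : ∫ x in (0 : ℝ)..L, deriv (flux η κ δ p u w θ q) x = 0 := by
    rw [hac.integral_deriv_eq_sub]
    simp [flux, hw0, hwL, hq0, hqL]
  obtain ⟨iF, eF⟩ := aux_int L τ m p hL cm cp (deriv f₁) f₂ f₃ f₄ (der _ hf1).continuous
    hf2.continuous hf3.continuous hf4.continuous
  obtain ⟨iU, eU⟩ := aux_int L τ m p hL cm cp (deriv u) w θ q (der _ hu).continuous
    hw.continuous hθ.continuous hq.continuous
  have iw : IntervalIntegrable (fun x => 2 * δ x * ‖deriv w x‖ ^ 2) volume 0 L := by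
    rw [← huI] at cδ
    exact ((continuousOn_const.mul cδ).mul
      ((der w hw).continuous.norm.pow 2).continuousOn).intervalIntegrable
  have imw : IntervalIntegrable (fun x => m x * ‖deriv w x‖ ^ 2) volume 0 L := by
    rw [← huI] at cm
    exact (cm.mul ((der w hw).continuous.norm.pow 2).continuousOn).intervalIntegrable
  have iq : IntervalIntegrable (fun x => β * ‖q x‖ ^ 2) volume 0 L :=
    (continuous_const.mul (hq.continuous.norm.pow 2)).intervalIntegrable _ _
  have key : (∫ x in (0 : ℝ)..L, 2 * δ x * ‖deriv w x‖ ^ 2) + β * ∫ x in (0 : ℝ)..L, ‖q x‖ ^ 2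
      ≤ Real.sqrt (normFsq L τ m p f₁ f₂ f₃ f₄) * Real.sqrt (normUsq L τ m p u w θ q) := by
    refine aux_opt _ _ _ (aux_cs L τ m p hL hτ hmpos hppos _ _ _ _)
      (aux_cs L τ m p hL hτ hmpos hppos u w θ q) fun t ht => ?_
    have hmono := intervalIntegral.integral_mono_ae_restrict hL.le (iw.add iq)
      ((hac.intervalIntegrable_deriv.add (iF.const_mul (t / 2))).add (iU.const_mul (t⁻¹ / 2))) ?_
    · rw [intervalIntegral.integral_add
        (hac.intervalIntegrable_deriv.add (iF.const_mul (t / 2))) (iU.const_mul (t⁻¹ / 2)),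
        intervalIntegral.integral_add hac.intervalIntegrable_deriv (iF.const_mul (t / 2)),
        intervalIntegral.integral_add iw iq, intervalIntegral.integral_const_mul,
        intervalIntegral.integral_const_mul, intervalIntegral.integral_const_mul,
        eF, eU, hfl0, zero_add] at hmono
      exact hmono
    · have hI : ∀ᵐ x ∂(volume.restrict (Icc (0 : ℝ) L)), x ∈ Ioo (0 : ℝ) L := by
        rw [← restrict_Ioo_eq_restrict_Icc]
        exact ae_restrict_mem measurableSet_Ioo
      filter_upwards [hI, ae_restrict_of_ae hδd, ae_restrict_of_ae hpd] with x hx h1 h2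
      have hid := aux_flux_deriv L η β κ τ m δ p lam f₁ f₂ f₃ f₄ u w θ q hsol x hx (h2 hx) (h1 hx)
      have hxI := Ioo_subset_Icc_self hx
      have a1 := mul_le_mul_of_nonneg_left (aux_re_le (deriv f₁ x) (deriv u x) t ht) (hppos x hxI).le
      have a2 := mul_le_mul_of_nonneg_left (aux_re_le (f₂ x) (w x) t ht) (hmpos x hxI).le
      have a3 := aux_re_le (f₃ x) (θ x) t ht
      have a4 := mul_le_mul_of_nonneg_left (aux_re_le (f₄ x) (q x) t ht) hτ.le
      beta_reduce
      rw [hid]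
      linarith
  set W := ∫ x in (0 : ℝ)..L, 2 * δ x * ‖deriv w x‖ ^ 2 with hW
  set Q := ∫ x in (0 : ℝ)..L, ‖q x‖ ^ 2 with hQ
  have hQ0 : 0 ≤ Q := intervalIntegral.integral_nonneg hL.le fun x hx => by positivity
  have hW0 : 0 ≤ W := intervalIntegral.integral_nonneg hL.le fun x hx =>
    mul_nonneg (mul_nonneg (by norm_num) (hδpos x hx).le) (by positivity)
  have hmW : (∫ x in (0 : ℝ)..L, m x * ‖deriv w x‖ ^ 2) ≤ M * W := by
    rw [hW, ← intervalIntegral.integral_const_mul]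
    refine intervalIntegral.integral_mono_on hL.le imw (iw.const_mul M) fun x hx => ?_
    have h1 := mul_le_mul_of_nonneg_right (hmδ x hx) (sq_nonneg ‖deriv w x‖)
    have h2 : 0 ≤ M * δ x * ‖deriv w x‖ ^ 2 :=
      mul_nonneg (mul_nonneg hM0 (hδpos x hx).le) (sq_nonneg _)
    linarith
  have e : τ / β * (β * Q) = τ * Q := by field_simp
  calc _ ≤ M * W + τ / β * (β * Q) := by rw [e]; linarith
    _ ≤ (M + τ / β) * (W + β * Q) := by
      have : 0 ≤ M * (β * Q) := by positivity
      have : 0 ≤ τ / β * W := by positivity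
      nlinarith
    _ ≤ (M + τ / β) * _ := mul_le_mul_of_nonneg_left key hC.le
    _ = _ := by ring
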